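/- In the formal power series ring ℚ[[x, y]] one has Σ_{n ≥ 0} Σ_{k ≥ 0} p₂(n,k) · y^k · x^n / n! = exp( y · (exp(x) − x − 1) ), where exp denotes the formal exponential series. -/

import Mathlib

open Finset

namespace KroneckerPaper

/-- A (removable) corner of a Young diagram: a cell with no cell below it nor to its right
(in English notation; equivalently, in French notation, a cell at the right end of its row
with no cell above it). -/
def IsCorner (μ : YoungDiagram) (c : ℕ × ℕ) : Prop :=
  c ∈ μ ∧ (c.1 + 1, c.2) ∉ μ ∧ (c.1, c.2 + 1) ∉ μ

/-- The *first corner* of a Young diagram: the unique corner lying on a row of maximal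
length. -/
def IsFirstCorner (μ : YoungDiagram) (c : ℕ × ℕ) : Prop :=
  IsCorner μ c ∧ μ.rowLen c.1 = μ.rowLen 0

/-- `μ'` is obtained from `μ` by adding one new cell which is a corner of `μ'`. -/
def AddCorner (μ μ' : YoungDiagram) : Prop :=
  ∃ c, IsCorner μ' c ∧ c ∉ μ.cells ∧ μ'.cells = insert c μ.cells

/-- `μ'` is obtained from `μ` by removing one corner of `μ`. -/
def RemoveCorner (μ μ' : YoungDiagram) : Prop :=
  ∃ c, IsCorner μ c ∧ μ'.cells = μ.cells.erase c

/-- `μ' ≠ μ` *differs from `μ` by the position of a corner*: it is obtained from `μ` by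
removing a corner of `μ` and adding a new cell which is a corner of `μ'`. -/
def MoveCorner (μ μ' : YoungDiagram) : Prop :=
  μ' ≠ μ ∧ ∃ c c', IsCorner μ c ∧ IsCorner μ' c' ∧ c' ∉ μ.cells.erase c ∧
    μ'.cells = insert c' (μ.cells.erase c)

/-- The one-row Young diagram `(n)`. -/
def rowDiagram (n : ℕ) : YoungDiagram :=
  YoungDiagram.ofRowLens [n] (List.pairwise_singleton _ n).sortedGE

/-- The Young diagram obtained by deleting the first (longest) row, i.e. the truncated
partition `λ̄ = (λ₂, …, λ_m)` of `λ = (λ₁, λ₂, …, λ_m)`. -/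
def truncate (μ : YoungDiagram) : YoungDiagram where
  cells := (μ.cells.filter fun c => 1 ≤ c.1).image fun c => (c.1 - 1, c.2)
  isLowerSet := by
    rintro ⟨i1, j1⟩ ⟨i2, j2⟩ ⟨hi, hj⟩ h
    simp only [Finset.coe_image, Finset.coe_filter, Set.mem_image, Set.mem_setOf_eq,
      Finset.mem_coe, YoungDiagram.mem_cells] at h ⊢
    obtain ⟨⟨a, b⟩, ⟨ha, ha1⟩, heq⟩ := h
    simp only [Prod.mk.injEq] at heq
    exact ⟨(i2 + 1, j2), ⟨μ.up_left_mem (by omega) (by omega) ha, by omega⟩, by simp⟩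

/-- A *Kronecker tableau* of length `k`, initial shape `μ` and final shape `lam`:
a sequence `μ⁰ = μ, μ¹, …, μ^k = lam` of diagrams such that each `μ^{i+1}` either differs
from `μ^i` by the position of a corner, or equals `μ^i` together with the datum of a
distinguished corner of `μ^{i+1}` other than its first corner. -/
structure KroneckerTableau (k : ℕ) (μ lam : YoungDiagram) where
  seq : Fin (k + 1) → YoungDiagram
  dist : Fin k → Option (ℕ × ℕ)
  init : seq 0 = μ
  final : seq (Fin.last k) = lam
  step : ∀ i : Fin k,
    (MoveCorner (seq i.castSucc) (seq i.succ) ∧ dist i = none) ∨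
    (seq i.succ = seq i.castSucc ∧
      ∃ c, dist i = some c ∧ IsCorner (seq i.succ) c ∧ ¬ IsFirstCorner (seq i.succ) c)

/-- A *partial standard tableau* of shape `α` with labels in `{1, …, k}`: a labelling of the
cells of `α` by pairwise distinct integers of `{1, …, k}` increasing along rows and columns
(cells outside `α` are labelled `0` by convention). -/
structure PartialST (α : YoungDiagram) (k : ℕ) where
  label : ℕ × ℕ → ℕ
  mem_of_cell : ∀ c ∈ α, label c ∈ Finset.Icc 1 k
  zero_of_not_cell : ∀ c, c ∉ α → label c = 0
  injOn : ∀ c ∈ α, ∀ c' ∈ α, label c = label c' → c = c'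
  row_incr : ∀ i j1 j2 : ℕ, j1 < j2 → (i, j2) ∈ α → label (i, j1) < label (i, j2)
  col_incr : ∀ i1 i2 j : ℕ, i1 < i2 → (i2, j) ∈ α → label (i1, j) < label (i2, j)

/-- `f^α`, the number of standard Young tableaux of shape `α`. -/
noncomputable def fSYT (α : YoungDiagram) : ℕ :=
  Nat.card (PartialST α α.card)

/-- `p₂ n k`: the number of partitions of an `n`-element set into exactly `k` blocks, each of
size at least `2` (associated Stirling numbers of the second kind). -/
noncomputable def p2 (n k : ℕ) : ℕ :=
  Nat.card {P : Finpartition (Finset.univ : Finset (Fin n)) //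
    P.parts.card = k ∧ ∀ b ∈ P.parts, 2 ≤ b.card}

/-- Every non-trivial cycle of `π` is *decreasing*: `π x < x` for every element `x` of a
non-trivial cycle which is not the minimum of its cycle. -/
def DecCycles {S : Type*} [LinearOrder S] (π : Equiv.Perm S) : Prop :=
  ∀ x, π x ≠ x → (∃ y, π.SameCycle x y ∧ y < x) → π x < x

/-- A pair `(T, π)` of a partial standard tableau of shape `α` with labels in `{1, …, k}`
and a permutation `π` of `{1, …, k}` all of whose non-trivial cycles are decreasing, such
that every fixed point of `π` is a label of `T` and every label of `T` is the greatest
element of its cycle in `π`. -/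
structure TabPerm (k : ℕ) (α : YoungDiagram) where
  T : PartialST α k
  π : Equiv.Perm ℕ
  perm_of : ∀ x : ℕ, x ∉ Finset.Icc 1 k → π x = x
  dec : DecCycles π
  fix_mem : ∀ x ∈ Finset.Icc 1 k, π x = x → ∃ c ∈ α, T.label c = x
  label_max : ∀ c ∈ α, ∀ y : ℕ, π.SameCycle (T.label c) y → y ≤ T.label c


/-- Substitution `f(g)` of a power series `g` with zero constant term into a power series
`f`: the coefficient of `Xⁿ` in `Σ_m (coeff m f) ⬝ g^m` (the sum is finite in each degree
since `g` has zero constant term, so `coeff n (g^m) = 0` for `m > n`). -/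
noncomputable def psSubst {R S : Type*} [CommSemiring R] [CommSemiring S] [Algebra R S]
    (f : PowerSeries R) (g : PowerSeries S) : PowerSeries S :=
  PowerSeries.mk fun n =>
    ∑ m ∈ Finset.range (n + 1),
      algebraMap R S (PowerSeries.coeff m f) * PowerSeries.coeff n (g ^ m)

/-- Set-of-blocks model of partitions of `s` into `k` blocks of size at least two. -/
def GG {α : Type*} [DecidableEq α] (s : Finset α) (k : ℕ) : Finset (Finset (Finset α)) :=
  s.powerset.powerset.filter fun A => A.card = k ∧
    (∀ a ∈ A, ∀ b ∈ A, a ≠ b → Disjoint a b) ∧ A.biUnion id = s ∧ ∀ b ∈ A, 2 ≤ b.card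

theorem mem_GG {α : Type*} [DecidableEq α] {s : Finset α} {k : ℕ} {A : Finset (Finset α)} :
    A ∈ GG s k ↔ A.card = k ∧
    (∀ a ∈ A, ∀ b ∈ A, a ≠ b → Disjoint a b) ∧ A.biUnion id = s ∧ ∀ b ∈ A, 2 ≤ b.card := by
  unfold GG
  rw [Finset.mem_filter]
  refine ⟨fun h => h.2, fun h => ⟨?_, h⟩⟩
  rw [Finset.mem_powerset]
  intro b hb
  rw [Finset.mem_powerset, ← h.2.2.1]
  exact Finset.subset_biUnion_of_mem id hb

theorem card_GG_succ {α : Type*} [DecidableEq α] (s : Finset α) (k : ℕ) :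
    (k + 1) * (GG s (k + 1)).card =
      ∑ b ∈ s.powerset.filter (fun b => 2 ≤ b.card), (GG (s \ b) k).card := by
  have h1 : (k + 1) * (GG s (k + 1)).card = ((GG s (k+1)).sigma fun A => A).card := by
    rw [Finset.card_sigma, Finset.sum_congr rfl (fun A hA => (mem_GG.1 hA).1)]
    simp [mul_comm]
  rw [h1, ← Finset.card_sigma]
  refine Finset.card_bij' (fun x _ => ⟨x.2, x.1.erase x.2⟩) (fun y _ => ⟨insert y.1 y.2, y.1⟩)
    ?_ ?_ ?_ ?_
  · rintro ⟨A, b⟩ h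
    simp only [Finset.mem_sigma, mem_GG, Finset.mem_filter, Finset.mem_powerset] at h ⊢
    obtain ⟨⟨hc, hd, hu, h2⟩, hb⟩ := h
    refine ⟨⟨?_, h2 b hb⟩, ?_, ?_, ?_, ?_⟩
    · rw [← hu]; exact Finset.subset_biUnion_of_mem id hb
    · rw [Finset.card_erase_of_mem hb, hc]; rfl
    · intro a ha c hc
      exact hd a (Finset.mem_of_mem_erase ha) c (Finset.mem_of_mem_erase hc)
    · ext x
      simp only [Finset.mem_biUnion, Finset.mem_erase, id, Finset.mem_sdiff, ← hu]
      constructor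
      · rintro ⟨a, ⟨hab, ha⟩, hx⟩
        exact ⟨⟨a, ha, hx⟩, fun hxb => Finset.disjoint_left.1 (hd a ha b hb hab) hx hxb⟩
      · rintro ⟨⟨a, ha, hx⟩, hxb⟩
        exact ⟨a, ⟨fun h => hxb (h ▸ hx), ha⟩, hx⟩
    · intro c hc; exact h2 c (Finset.mem_of_mem_erase hc)
  · rintro ⟨b, B⟩ h
    simp only [Finset.mem_sigma, mem_GG, Finset.mem_filter, Finset.mem_powerset] at h ⊢
    obtain ⟨⟨hbs, hb2⟩, hc, hd, hu, h2⟩ := h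
    have hdis : ∀ a ∈ B, Disjoint a b := by
      intro a ha
      have : a ⊆ s \ b := by rw [← hu]; exact Finset.subset_biUnion_of_mem id ha
      exact Finset.disjoint_of_subset_left this Finset.sdiff_disjoint
    have hbB : b ∉ B := by
      intro h
      have := hdis b h
      rw [disjoint_self] at this
      subst this
      simp at hb2
    refine ⟨⟨?_, ?_, ?_, ?_⟩, Finset.mem_insert_self _ _⟩
    · rw [Finset.card_insert_of_notMem hbB, hc]
    · intro a ha c hc hac
      rcases Finset.mem_insert.1 ha with ha1 | ha1 <;>
        rcases Finset.mem_insert.1 hc with hc1 | hc1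
      · exact absurd (ha1.trans hc1.symm) hac
      · rw [ha1]; exact (hdis c hc1).symm
      · rw [hc1]; exact hdis a ha1
      · exact hd a ha1 c hc1 hac
    · rw [Finset.biUnion_insert, hu]
      simp [hbs]
    · intro c hc
      rcases Finset.mem_insert.1 hc with rfl | hc
      · exact hb2
      · exact h2 c hc
  · rintro ⟨A, b⟩ h
    simp only [Finset.mem_sigma] at h
    simp [Finset.insert_erase h.2]
  · rintro ⟨b, B⟩ h
    simp only [Finset.mem_sigma, mem_GG, Finset.mem_filter, Finset.mem_powerset] at h
    obtain ⟨⟨hbs, hb2⟩, hc, hd, hu, h2⟩ := h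
    have hbB : b ∉ B := by
      intro h
      have h3 : b ⊆ s \ b := by rw [← hu]; exact Finset.subset_biUnion_of_mem id h
      have := Finset.disjoint_of_subset_left h3 Finset.sdiff_disjoint
      rw [disjoint_self] at this
      subst this
      simp at hb2
    simp [Finset.erase_insert hbB]

/-- The one-variable series `exp x - x - 1`. -/
noncomputable def gg : PowerSeries ℚ := PowerSeries.exp ℚ - PowerSeries.X - 1

theorem coeff_gg (n : ℕ) :
    PowerSeries.coeff n gg = if 2 ≤ n then (1 : ℚ) / n.factorial else 0 := by
  unfold gg
  rcases n with _ | _ | n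
  · simp
  · simp [PowerSeries.coeff_exp, PowerSeries.coeff_one]
  · simp [PowerSeries.coeff_exp, PowerSeries.coeff_one, PowerSeries.coeff_X]

theorem card_GG {α : Type*} [DecidableEq α] (k : ℕ) : ∀ s : Finset α,
    (k.factorial : ℚ) * (GG s k).card = s.card.factorial * PowerSeries.coeff s.card (gg ^ k) := by
  induction k with
  | zero =>
    intro s
    rw [pow_zero, PowerSeries.coeff_one]
    by_cases hs : s = ∅
    · subst hs
      have : GG (∅ : Finset α) 0 = {∅} := by
        ext A
        rw [mem_GG, Finset.mem_singleton, Finset.card_eq_zero]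
        constructor
        · exact fun h => h.1
        · rintro rfl; simp
      simp [this]
    · have : GG s 0 = ∅ := by
        ext A
        rw [mem_GG, Finset.card_eq_zero]
        simp only [Finset.notMem_empty, iff_false]
        rintro ⟨rfl, -, h, -⟩
        exact hs (by simpa using h.symm)
      simp [this, hs]
  | succ k ih =>
    intro s
    have h := congrArg (Nat.cast : ℕ → ℚ) (card_GG_succ s k)
    push_cast at h
    rw [Nat.factorial_succ]
    push_cast
    rw [show ((k : ℚ) + 1) * k.factorial * (GG s (k+1)).card
      = k.factorial * (((k : ℚ) + 1) * (GG s (k+1)).card) by ring, h, Finset.mul_sum,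
      Finset.sum_congr rfl (fun b _ => ih (s \ b)), Finset.sum_filter]
    have h2 : ∀ b ∈ s.powerset, (if 2 ≤ b.card then ((s \ b).card.factorial : ℚ) *
          PowerSeries.coeff (s \ b).card (gg ^ k) else 0) =
        (fun m => if 2 ≤ m then ((s.card - m).factorial : ℚ) *
          PowerSeries.coeff (s.card - m) (gg ^ k) else 0) b.card := by
      intro b hb
      rw [Finset.card_sdiff_of_subset (Finset.mem_powerset.1 hb)]
    rw [Finset.sum_congr rfl h2, Finset.sum_powerset_apply_card (fun m => if 2 ≤ m then
        ((s.card - m).factorial : ℚ) * PowerSeries.coeff (s.card - m) (gg ^ k) else 0), pow_succ', PowerSeries.coeff_mul,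
      Finset.Nat.sum_antidiagonal_eq_sum_range_succ_mk, Finset.mul_sum]
    refine Finset.sum_congr rfl fun m hm => ?_
    have hm' : m ≤ s.card := Nat.lt_succ_iff.1 (Finset.mem_range.1 hm)
    rw [coeff_gg]
    dsimp only
    split_ifs
    · rw [nsmul_eq_mul, ← Nat.choose_mul_factorial_mul_factorial hm']
      push_cast
      have := Nat.cast_ne_zero (R := ℚ).2 (Nat.factorial_ne_zero m)
      field_simp
    · simp

theorem p2_eq (n k : ℕ) : p2 n k = (GG (Finset.univ : Finset (Fin n)) k).card := by
  unfold p2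
  rw [← Nat.card_eq_finsetCard]
  refine Nat.card_congr (Equiv.ofBijective
    (fun P => ⟨P.1.parts, mem_GG.2 ⟨P.2.1, ?_, ?_, P.2.2⟩⟩) ⟨?_, ?_⟩)
  · intro a ha b hb hab
    exact P.1.disjoint ha hb hab
  · exact P.1.biUnion_parts
  · rintro ⟨P, hP⟩ ⟨Q, hQ⟩ h
    simp only [Subtype.mk.injEq] at h ⊢
    exact Finpartition.ext h
  · rintro ⟨A, hA⟩
    obtain ⟨hc, hd, hu, h2⟩ := mem_GG.1 hA
    refine ⟨⟨⟨A, ?_, ?_, ?_⟩, hc, h2⟩, rfl⟩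
    · rw [Finset.supIndep_iff_pairwiseDisjoint]
      intro a ha b hb hab
      exact hd a ha b hb hab
    · rw [Finset.sup_eq_biUnion]; exact hu
    · intro h
      have := h2 _ h
      simp at this

/-- The bivariate generating function of Remark 3.4:
`Σ_{n,k} p₂(n,k) y^k x^n/n! = e^{y(eˣ - x - 1)}`, in `ℚ[[y]][[x]]` (outer variable `x`,
inner variable `y`). -/
theorem statement7 :
    (PowerSeries.mk fun n =>
        (PowerSeries.mk fun k => (p2 n k : ℚ) / n.factorial : PowerSeries ℚ)) =
      psSubst (PowerSeries.exp ℚ)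
        ((PowerSeries.C (R := PowerSeries ℚ) PowerSeries.X) *
          (PowerSeries.exp (PowerSeries ℚ) - PowerSeries.X - 1)) := by
  have hg : (PowerSeries.C (R := PowerSeries ℚ) PowerSeries.X) *
          (PowerSeries.exp (PowerSeries ℚ) - PowerSeries.X - 1) =
      PowerSeries.C (R := PowerSeries ℚ) PowerSeries.X *
        PowerSeries.map (PowerSeries.C (R := ℚ)) gg := by
    simp [gg, PowerSeries.map_exp]
  have hz : ∀ n k, n < k → PowerSeries.coeff n (gg ^ k) = 0 := by
    intro n k h
    have hX : (PowerSeries.X : PowerSeries ℚ) ∣ gg := by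
      rw [PowerSeries.X_dvd_iff, ← PowerSeries.coeff_zero_eq_constantCoeff_apply, coeff_gg]
      simp
    exact PowerSeries.X_pow_dvd_iff.1 (pow_dvd_pow_of_dvd hX k) n h
  rw [hg]
  ext n k
  have hp : (p2 n k : ℚ) / n.factorial =
      1 / k.factorial * PowerSeries.coeff n (gg ^ k) := by
    have := card_GG k (Finset.univ : Finset (Fin n))
    rw [← p2_eq, Finset.card_univ, Fintype.card_fin] at this
    have h1 := Nat.cast_ne_zero (R := ℚ).2 (Nat.factorial_ne_zero n)
    have h2 := Nat.cast_ne_zero (R := ℚ).2 (Nat.factorial_ne_zero k)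
    field_simp
    linarith
  have hm : ∀ m, PowerSeries.coeff k (algebraMap ℚ (PowerSeries ℚ)
        (PowerSeries.coeff m (PowerSeries.exp ℚ)) *
      PowerSeries.coeff n ((PowerSeries.C (R := PowerSeries ℚ) PowerSeries.X *
        PowerSeries.map (PowerSeries.C (R := ℚ)) gg) ^ m)) =
      if k = m then 1 / (m.factorial : ℚ) * PowerSeries.coeff n (gg ^ m) else 0 := by
    intro m
    rw [mul_pow, ← map_pow, ← map_pow, PowerSeries.coeff_C_mul, PowerSeries.coeff_map,
      PowerSeries.algebraMap_apply, Algebra.algebraMap_self, RingHom.id_apply,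
      PowerSeries.coeff_C_mul, PowerSeries.coeff_mul_C, PowerSeries.coeff_X_pow,
      PowerSeries.coeff_exp]
    split_ifs <;> simp
  simp only [psSubst, PowerSeries.coeff_mk, map_sum, hm]
  rw [hp, Finset.sum_ite_eq]
  split_ifs with h
  · rfl
  · rw [hz n k (by simpa using h), mul_zero]

end KroneckerPaper
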